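/- arXiv:2408.11143 — 5 statements merged into one kernel-verified Lean document; each statement's English description precedes it below -/
import Mathlib

section
/- Let c¹,…,c^d̄ : U → ℝ be smooth functions. The vector field w = Σ_{k=1}^{d̄} cᵏ·v_k is projectable (i.e., its θ-components are independent of ξ) if and only if each cᵏ is independent of ξ (so c = c(θ) = (c¹(θ),…,c^d̄(θ))ᵀ) and (∂_{ξ^{j₁}}⋯∂_{ξ^{j_r}}L)(θ,ξ)·c(θ) = 0 for every order r ≥ 1, all indices j₁,…,j_r ∈ {1,…,m} and all (θ,ξ) ∈ U; equivalently, if and only if c is independent of ξ and M(θ,ξ)·c(θ) = 0 on U. -/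
/-!
For a field `w = ∑ cᵏ v_k` in normalized form, the `θ`-component of index `i < d̄` is exactly `cⁱ`,
and the one of index `ī ≥ d̄` is `∑ₖ cᵏ a_k^ī` (`fst_sum_vK_of_lt`, `fst_sum_vK_of_ge`). So `w` is
projectable iff `c` is independent of `ξ` and, for each `θ`, every function
`ξ ↦ ∑ₖ a_k^ī(θ, ξ) cᵏ(θ)` is constant on `Ξ`. Here the `cᵏ(θ)` are scalars, so
`∂_{ξʲ}` of such a combination is the same combination of the derivatives
(`hasFDerivAt_slice_sum`).

If the combination is constant, all its iterated `ξ`-derivatives vanish, by induction on the order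
(`sum_xiDerivs_eq_zero`). Conversely, the vanishing of the first-order derivatives already makes the
combination constant, because `Ξ` is open and connected (`sum_const_of_xiDerivs_eq_zero`).

For the matrix `M`, its rows are among the derivatives, and every derivative lies pointwise in the
row space of `M`; the condition `row ⬝ c = 0` is linear in the row, so the two systems of equations
agree.
-/

open scoped BigOperators

/-- Points of `ℝⁿ × ℝᵐ` with coordinates `(θ, ξ)`. -/
abbrev Pt (n m : ℕ) : Type := (Fin n → ℝ) × (Fin m → ℝ)

/-- The normalized vector field
`v_k = ∂_{θᵏ} + Σ_{ī=d̄+1}ⁿ a_k^ī ∂_{θ^ī} + Σ_{j=1}^{m−d+d̄} b_k^j ∂_{ξʲ}` (0-based indices). -/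
noncomputable def vK {n m : ℕ} (dbar d : ℕ)
    (a : Fin dbar → Fin n → Pt n m → ℝ) (b : Fin dbar → Fin m → Pt n m → ℝ)
    (k : Fin dbar) (p : Pt n m) : Pt n m :=
  (fun i => if (i : ℕ) < dbar then (if (i : ℕ) = (k : ℕ) then 1 else 0) else a k i p,
   fun j => if (j : ℕ) < m - (d - dbar) then b k j p else 0)

/-- A vector field on `U = Θ × Ξ` is projectable iff its θ-components are
independent of ξ. -/
def ProjOn {n m : ℕ} (Θ : Set (Fin n → ℝ)) (Ξ : Set (Fin m → ℝ))
    (w : Pt n m → Pt n m) : Prop :=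
  ∀ θ ∈ Θ, ∀ ξ ∈ Ξ, ∀ ξ' ∈ Ξ, (w (θ, ξ)).1 = (w (θ, ξ')).1

/-- Iterated partial derivatives `∂_{ξ^{j₁}} ⋯ ∂_{ξ^{j_r}} g` of a scalar function. -/
noncomputable def xiDerivs {n m : ℕ} : List (Fin m) → (Pt n m → ℝ) → Pt n m → ℝ
  | [], g => g
  | j :: js, g => fun p => fderiv ℝ (xiDerivs js g) p ((0 : Fin n → ℝ), Pi.single j 1)

theorem fst_sum_vK_of_lt {n m dbar : ℕ} (d : ℕ)
    (a : Fin dbar → Fin n → Pt n m → ℝ) (b : Fin dbar → Fin m → Pt n m → ℝ)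
    (c : Fin dbar → Pt n m → ℝ) (p : Pt n m) (k : Fin dbar) (i : Fin n) (hik : (i : ℕ) = k) :
    (∑ l, c l p • vK dbar d a b l p).1 i = c k p := by
  have hi : (i : ℕ) < dbar := hik ▸ k.2
  simp [Prod.fst_sum, Finset.sum_apply, vK, hik, ← Fin.ext_iff]

theorem fst_sum_vK_of_ge {n m dbar : ℕ} (d : ℕ)
    (a : Fin dbar → Fin n → Pt n m → ℝ) (b : Fin dbar → Fin m → Pt n m → ℝ)
    (c : Fin dbar → Pt n m → ℝ) (p : Pt n m) (i : Fin n) (hi : dbar ≤ (i : ℕ)) :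
    (∑ l, c l p • vK dbar d a b l p).1 i = ∑ k, a k i p * c k p := by
  simp [Prod.fst_sum, Finset.sum_apply, vK, not_lt.2 hi, mul_comm]

theorem contDiffOn_xiDerivs {n m : ℕ} {s : Set (Pt n m)} (hs : IsOpen s) {g : Pt n m → ℝ}
    (hg : ContDiffOn ℝ (⊤ : ℕ∞) g s) (js : List (Fin m)) :
    ContDiffOn ℝ (⊤ : ℕ∞) (xiDerivs js g) s := by
  induction js with
  | nil => exact hg
  | cons j js ih =>
    exact (ih.fderiv_of_isOpen hs (by simp)).clm_apply contDiffOn_const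

/-- The derivative in `ξ` of a linear combination with scalar coefficients `κ` (in the application
`κ k = cᵏ(θ)`), restricted to the slice through `θ`. -/
theorem hasFDerivAt_slice_sum {n m N : ℕ} {g : Fin N → Pt n m → ℝ} {θ : Fin n → ℝ}
    {ξ : Fin m → ℝ} (hg : ∀ k, DifferentiableAt ℝ (g k) (θ, ξ)) (κ : Fin N → ℝ) :
    HasFDerivAt (fun η => ∑ k, g k (θ, η) * κ k)
      (∑ k, κ k • (fderiv ℝ (g k) (θ, ξ)).comp
        (ContinuousLinearMap.inr ℝ (Fin n → ℝ) (Fin m → ℝ))) ξ := by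
  refine HasFDerivAt.fun_sum fun k _ => HasFDerivAt.mul_const ?_ (κ k)
  exact (hg k).hasFDerivAt.comp ξ (hasFDerivAt_prodMk_right θ ξ)

/-- If `∑ₖ κₖ gₖ(θ, ·)` is constant on `Ξ`, then its iterated `ξ`-derivatives of order `≥ 1`
vanish there. -/
theorem sum_xiDerivs_eq_zero {n m N : ℕ} {Θ : Set (Fin n → ℝ)} {Ξ : Set (Fin m → ℝ)}
    (hΘo : IsOpen Θ) (hΞo : IsOpen Ξ) {g : Fin N → Pt n m → ℝ}
    (hg : ∀ k, ContDiffOn ℝ (⊤ : ℕ∞) (g k) (Θ ×ˢ Ξ)) {θ : Fin n → ℝ} (hθ : θ ∈ Θ) (κ : Fin N → ℝ)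
    {C : ℝ} (hconst : ∀ ξ ∈ Ξ, ∑ k, g k (θ, ξ) * κ k = C) (js : List (Fin m)) (hjs : js ≠ []) :
    ∀ ξ ∈ Ξ, ∑ k, xiDerivs js (g k) (θ, ξ) * κ k = 0 := by
  have hU : IsOpen (Θ ×ˢ Ξ) := hΘo.prod hΞo
  -- The differentiation step, uniform in whether the lower-order combination is `C` or `0`.
  have step : ∀ (j : Fin m) (js : List (Fin m)) (C' : ℝ),
      (∀ ξ ∈ Ξ, ∑ k, xiDerivs js (g k) (θ, ξ) * κ k = C') →
      ∀ ξ ∈ Ξ, ∑ k, xiDerivs (j :: js) (g k) (θ, ξ) * κ k = 0 := by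
    intro j js C' h ξ hξ
    have h1 := hasFDerivAt_slice_sum (g := fun k => xiDerivs js (g k)) (θ := θ) (ξ := ξ)
      (fun k => ((contDiffOn_xiDerivs hU (hg k) js).differentiableOn (by simp)).differentiableAt
        (hU.mem_nhds ⟨hθ, hξ⟩)) κ
    have h2 : HasFDerivAt (fun η => ∑ k, xiDerivs js (g k) (θ, η) * κ k)
        (0 : (Fin m → ℝ) →L[ℝ] ℝ) ξ :=
      (hasFDerivAt_const C' ξ).congr_of_eventuallyEq
        (Filter.mem_of_superset (hΞo.mem_nhds hξ) h)
    have h3 := DFunLike.congr_fun (h1.unique h2) (Pi.single j 1)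
    simpa [xiDerivs, sum_apply, mul_comm] using h3
  induction js with
  | nil => exact absurd rfl hjs
  | cons j js ih =>
    by_cases hnil : js = []
    · subst hnil
      exact step j [] C hconst
    · exact step j js 0 (ih hnil)

/-- On an open connected `Ξ`, the vanishing of the first-order `ξ`-derivatives alone makes
`∑ₖ κₖ gₖ(θ, ·)` constant. -/
theorem sum_const_of_xiDerivs_eq_zero {n m N : ℕ} {Θ : Set (Fin n → ℝ)} {Ξ : Set (Fin m → ℝ)}
    (hΘo : IsOpen Θ) (hΞo : IsOpen Ξ) (hΞc : IsPreconnected Ξ) {g : Fin N → Pt n m → ℝ}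
    (hg : ∀ k, ContDiffOn ℝ (⊤ : ℕ∞) (g k) (Θ ×ˢ Ξ)) {θ : Fin n → ℝ} (hθ : θ ∈ Θ) (κ : Fin N → ℝ)
    (h0 : ∀ j : Fin m, ∀ ξ ∈ Ξ, ∑ k, xiDerivs [j] (g k) (θ, ξ) * κ k = 0)
    {ξ₁ ξ₂ : Fin m → ℝ} (hξ₁ : ξ₁ ∈ Ξ) (hξ₂ : ξ₂ ∈ Ξ) :
    ∑ k, g k (θ, ξ₁) * κ k = ∑ k, g k (θ, ξ₂) * κ k := by
  have hder : ∀ η ∈ Ξ, HasFDerivAt (fun η => ∑ k, g k (θ, η) * κ k)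
      (0 : (Fin m → ℝ) →L[ℝ] ℝ) η := by
    intro η hη
    have h1 := hasFDerivAt_slice_sum (g := g) (θ := θ) (ξ := η)
      (fun k => ((hg k).differentiableOn (by simp)).differentiableAt
        ((hΘo.prod hΞo).mem_nhds ⟨hθ, hη⟩)) κ
    convert h1
    symm
    apply ContinuousLinearMap.coe_injective
    refine LinearMap.pi_ext' fun j => LinearMap.ext_ring ?_
    simpa [xiDerivs, sum_apply, mul_comm] using h0 j η hη
  exact hΞo.is_const_of_fderiv_eq_zero (𝕜 := ℝ) hΞc
    (fun η hη => (hder η hη).differentiableAt.differentiableWithinAt)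
    (fun η hη => (hder η hη).fderiv) hξ₁ hξ₂

/-- the linear combination `w = Σ_k cᵏ·v_k` is projectable iff each `cᵏ`
is independent of ξ and all iterated ξ-partial derivatives of `L` satisfy
`(∂_{ξ^{j₁}}⋯∂_{ξ^{j_r}}L)·c = 0` on `U`; equivalently, iff `c` is independent of ξ and
`M·c = 0` on `U`. -/
theorem stmt1 (n m dbar d : ℕ) (hn : 1 ≤ n) (hm : 1 ≤ m)
    (hdd : dbar ≤ d) (hdn : dbar ≤ n) (hdm : d - dbar ≤ m)
    (Θ : Set (Fin n → ℝ)) (Ξ : Set (Fin m → ℝ))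
    (hΘo : IsOpen Θ) (hΘc : IsConnected Θ) (hΞo : IsOpen Ξ) (hΞc : IsConnected Ξ)
    (a : Fin dbar → Fin n → Pt n m → ℝ)
    (b : Fin dbar → Fin m → Pt n m → ℝ)
    (ha : ∀ k i, ContDiffOn ℝ (⊤ : ℕ∞) (a k i) (Θ ×ˢ Ξ))
    (hb : ∀ k j, ContDiffOn ℝ (⊤ : ℕ∞) (b k j) (Θ ×ˢ Ξ))
    -- the matrix M: finitely many iterated ξ-partial derivatives of rows of L,
    -- of constant rank, whose row space contains all such derivatives
    (r : ℕ) (Mrow : Fin r → Pt n m → Fin dbar → ℝ)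
    (hMrows : ∀ i : Fin r, ∃ (js : List (Fin m)) (ib : Fin n), js ≠ [] ∧ dbar ≤ (ib : ℕ) ∧
      ∀ p k, Mrow i p k = xiDerivs js (fun q => a k ib q) p)
    (hMrank : ∀ p ∈ Θ ×ˢ Ξ, ∀ p' ∈ Θ ×ˢ Ξ,
      (Matrix.of fun i k => Mrow i p k).rank = (Matrix.of fun i k => Mrow i p' k).rank)
    (hMspan : ∀ (js : List (Fin m)), js ≠ [] → ∀ ib : Fin n, dbar ≤ (ib : ℕ) →
      ∀ p ∈ Θ ×ˢ Ξ, (fun k => xiDerivs js (fun q => a k ib q) p) ∈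
        Submodule.span ℝ (Set.range fun i => Mrow i p))
    -- the smooth coefficient functions c¹,…,c^d̄
    (c : Fin dbar → Pt n m → ℝ)
    (hc : ∀ k, ContDiffOn ℝ (⊤ : ℕ∞) (c k) (Θ ×ˢ Ξ)) :
    (ProjOn Θ Ξ (fun p => ∑ k, c k p • vK dbar d a b k p) ↔
      ((∀ k, ∀ θ ∈ Θ, ∀ ξ ∈ Ξ, ∀ ξ' ∈ Ξ, c k (θ, ξ) = c k (θ, ξ')) ∧
        ∀ (js : List (Fin m)), js ≠ [] → ∀ ib : Fin n, dbar ≤ (ib : ℕ) →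
          ∀ p ∈ Θ ×ˢ Ξ, ∑ k, xiDerivs js (fun q => a k ib q) p * c k p = 0)) ∧
    (ProjOn Θ Ξ (fun p => ∑ k, c k p • vK dbar d a b k p) ↔
      ((∀ k, ∀ θ ∈ Θ, ∀ ξ ∈ Ξ, ∀ ξ' ∈ Ξ, c k (θ, ξ) = c k (θ, ξ')) ∧
        ∀ p ∈ Θ ×ˢ Ξ, ∀ i : Fin r, ∑ k, Mrow i p k * c k p = 0)) := by
  have hderivs : ProjOn Θ Ξ (fun p => ∑ k, c k p • vK dbar d a b k p) ↔
      ((∀ k, ∀ θ ∈ Θ, ∀ ξ ∈ Ξ, ∀ ξ' ∈ Ξ, c k (θ, ξ) = c k (θ, ξ')) ∧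
        ∀ (js : List (Fin m)), js ≠ [] → ∀ ib : Fin n, dbar ≤ (ib : ℕ) →
          ∀ p ∈ Θ ×ˢ Ξ, ∑ k, xiDerivs js (fun q => a k ib q) p * c k p = 0) := by
    constructor
    · intro hP
      have hcind : ∀ k, ∀ θ ∈ Θ, ∀ ξ ∈ Ξ, ∀ ξ' ∈ Ξ, c k (θ, ξ) = c k (θ, ξ') := by
        intro k θ hθ ξ hξ ξ' hξ'
        have h := congrFun (hP θ hθ ξ hξ ξ' hξ') (Fin.castLE hdn k)
        simpa only [fst_sum_vK_of_lt d a b c _ k (Fin.castLE hdn k) rfl] using h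
      refine ⟨hcind, ?_⟩
      rintro js hjs ib hib ⟨θ, ξ⟩ ⟨hθ, hξ⟩
      -- Freeze the coefficients at the base point `(θ, ξ)`; they are the same along the slice.
      refine sum_xiDerivs_eq_zero hΘo hΞo (fun k => ha k ib) hθ (fun k => c k (θ, ξ))
        (C := ∑ k, a k ib (θ, ξ) * c k (θ, ξ)) ?_ js hjs ξ hξ
      intro η hη
      have h := congrFun (hP θ hθ η hη ξ hξ) ib
      simp only [fst_sum_vK_of_ge d a b c _ ib hib] at h
      rw [← h]
      exact Finset.sum_congr rfl fun k _ => by rw [hcind k θ hθ η hη ξ hξ]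
    · rintro ⟨hcind, h0⟩ θ hθ ξ hξ ξ' hξ'
      funext i
      rcases lt_or_ge (i : ℕ) dbar with hi | hi
      · simp only [fst_sum_vK_of_lt d a b c _ ⟨i, hi⟩ i rfl]
        exact hcind _ θ hθ ξ hξ ξ' hξ'
      · simp only [fst_sum_vK_of_ge d a b c _ i hi]
        have h := sum_const_of_xiDerivs_eq_zero hΘo hΞo hΞc.isPreconnected (fun k => ha k i) hθ
          (fun k => c k (θ, ξ)) (fun j η hη => ?_) hξ hξ'
        · rw [h]
          exact Finset.sum_congr rfl fun k _ => by rw [hcind k θ hθ ξ hξ ξ' hξ']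
        · rw [← h0 [j] (by simp) i hi (θ, η) ⟨hθ, hη⟩]
          exact Finset.sum_congr rfl fun k _ => by rw [hcind k θ hθ ξ hξ η hη]
  refine ⟨hderivs, hderivs.trans (and_congr_right fun _ => ⟨fun h p hp i => ?_, ?_⟩)⟩
  · obtain ⟨js, ib, hjs, hib, hrow⟩ := hMrows i
    simpa only [hrow] using h js hjs ib hib p hp
  · intro h js hjs ib hib p hp
    refine Submodule.span_induction (p := fun (v : Fin dbar → ℝ) _ => ∑ k, v k * c k p = 0)
      ?_ ?_ ?_ ?_ (hMspan js hjs ib hib p hp)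
    · rintro _ ⟨i, rfl⟩
      exact h p hp i
    · simp
    · intro x y _ _ hx hy
      simp [add_mul, Finset.sum_add_distrib, hx, hy]
    · intro t x _ hx
      simp [mul_assoc, ← Finset.mul_sum, hx]
end

section
/- Let Ξ ⊆ ℝᵐ be open and connected and let M : Ξ → ℝ^{r×d̄} be a smooth matrix-valued map of constant rank such that for every j ∈ {1,…,m} and every ξ ∈ Ξ, each row of the partial derivative ∂_{ξʲ}M(ξ) lies in the row space of M(ξ). Then the kernel {c ∈ ℝ^d̄ : M(ξ)·c = 0} is the same linear subspace of ℝ^d̄ for every ξ ∈ Ξ. -/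
open scoped BigOperators

/-!
View `M(ξ)` as a linear map `T(ξ)`. A row of `∂_v M(ξ)` in the row space of `M(ξ)` vanishes on
`ker T(ξ)`, so the hypothesis says `ker T(ξ) ⊆ ker ∂_v T(ξ)`.

Near a point `x₀`, let `W` be a complement of `ker T(x₀)` and `L` a left inverse of `T(x₀)|_W`.
The endomorphism `A(x) = L ∘ T(x)|_W` of `W` is invertible for `x` near `x₀`, so `T(x)|_W` is
injective, and by constancy of the rank `T(x)` and `T(x)|_W` have the same range. Hence for
`c ∈ ker T(x₀)` the differentiable function `w(x) = A(x)⁻¹ L T(x) c ∈ W` satisfies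
`T(x) c = T(x) w(x)`. Differentiating gives `∂_v T (c - w) = T (∂_v w)`; the left side vanishes as
`c - w ∈ ker T(x)`, so `∂_v w = 0` by injectivity on `W`. Thus `w` is constant, equal to
`w(x₀) = 0`, and `T(x) c = 0`. So `ker T(x₀) ⊆ ker T(x)`, with equality by dimension
(`eventually_ker_eq`); connectedness globalizes this.
-/

open Topology in
/-- If a family of linear maps is differentiable and of constant rank near `x₀`, and its
derivatives vanish on the kernels, then the kernel is constant near `x₀`. -/
lemma eventually_ker_eq {X E F : Type*} [NormedAddCommGroup X] [NormedSpace ℝ X]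
    [NormedAddCommGroup E] [NormedSpace ℝ E] [FiniteDimensional ℝ E]
    [NormedAddCommGroup F] [NormedSpace ℝ F] [FiniteDimensional ℝ F]
    (T : X → E →L[ℝ] F) (x₀ : X) (hd : ∀ᶠ x in 𝓝 x₀, DifferentiableAt ℝ T x)
    (hr : ∀ᶠ x in 𝓝 x₀, Module.finrank ℝ (LinearMap.range (T x : E →ₗ[ℝ] F)) =
      Module.finrank ℝ (LinearMap.range (T x₀ : E →ₗ[ℝ] F)))
    (hk : ∀ᶠ x in 𝓝 x₀, ∀ v c, T x c = 0 → fderiv ℝ T x v c = 0) :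
    ∀ᶠ x in 𝓝 x₀, LinearMap.ker (T x₀ : E →ₗ[ℝ] F) = LinearMap.ker (T x : E →ₗ[ℝ] F) := by
  obtain ⟨W, hW⟩ := Submodule.exists_isCompl (LinearMap.ker (T x₀ : E →ₗ[ℝ] F))
  have hinj₀ : LinearMap.ker ((T x₀ : E →ₗ[ℝ] F) ∘ₗ W.subtype) = ⊥ := by
    rw [LinearMap.ker_eq_bot']
    intro w hw
    have : (w : E) ∈ LinearMap.ker (T x₀ : E →ₗ[ℝ] F) := hw
    exact Subtype.ext (Submodule.disjoint_def.1 hW.disjoint _ this w.2)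
  have : CompleteSpace W := FiniteDimensional.complete ℝ W
  obtain ⟨L₀, hL₀⟩ := LinearMap.exists_leftInverse_of_injective _ hinj₀
  set L : F →L[ℝ] W := LinearMap.toContinuousLinearMap L₀
  set A : X → (W →L[ℝ] W) := fun x => L.comp ((T x).comp W.subtypeL) with hA
  have hA₀ : A x₀ = 1 := by
    ext w
    exact congrArg Subtype.val (LinearMap.congr_fun hL₀ w)
  have hAd : ∀ x, DifferentiableAt ℝ T x → DifferentiableAt ℝ A x := fun x hx =>
    (differentiableAt_const L).clm_comp (hx.clm_comp (differentiableAt_const _))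
  have hAu : ∀ᶠ x in 𝓝 x₀, IsUnit (A x) := by
    have h1 : IsUnit (A x₀) := by rw [hA₀]; exact isUnit_one
    exact (hAd x₀ hd.self_of_nhds).continuousAt
      ((Units.isOpen (R := W →L[ℝ] W)).mem_nhds h1)
  obtain ⟨ε, hε, hball⟩ := Metric.eventually_nhds_iff_ball.1 ((hd.and hr).and (hk.and hAu))
  have hinj : ∀ x ∈ Metric.ball x₀ ε, ∀ w : W, T x w = 0 → w = 0 := by
    intro x hx w hw
    have h1 : A x w = 0 := by simp [hA, hw]
    have h2 := Ring.inverse_mul_cancel _ (hball x hx).2.2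
    have h3 := DFunLike.congr_fun h2 w
    simpa [h1] using h3.symm
  have hrange : ∀ x ∈ Metric.ball x₀ ε, ∀ c, ∃ w : W, T x w = T x c := by
    intro x hx c
    have hi : LinearMap.ker ((T x : E →ₗ[ℝ] F) ∘ₗ W.subtype) = ⊥ :=
      LinearMap.ker_eq_bot'.2 fun w hw => hinj x hx w hw
    have e1 := LinearMap.finrank_range_of_inj (LinearMap.ker_eq_bot.1 hi)
    have e2 := Submodule.finrank_add_eq_of_isCompl hW
    have e3 := LinearMap.finrank_range_add_finrank_ker (T x₀ : E →ₗ[ℝ] F)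
    have e4 := (hball x hx).1.2
    have := Submodule.eq_of_le_of_finrank_eq
      (LinearMap.range_comp_le_range W.subtype (T x : E →ₗ[ℝ] F)) (by omega)
    have hc : T x c ∈ LinearMap.range ((T x : E →ₗ[ℝ] F) ∘ₗ W.subtype) := by
      rw [this]; exact ⟨c, rfl⟩
    exact hc
  have hle : ∀ x ∈ Metric.ball x₀ ε,
      LinearMap.ker (T x₀ : E →ₗ[ℝ] F) ≤ LinearMap.ker (T x : E →ₗ[ℝ] F) := by
    intro x hx c hc
    have hc₀ : T x₀ c = 0 := hc
    set w : X → W := fun x => Ring.inverse (A x) (L (T x c)) with hw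
    have hTw : ∀ y ∈ Metric.ball x₀ ε, T y c = T y (w y) := by
      intro y hy
      obtain ⟨u, hu⟩ := hrange y hy c
      have h1 : L (T y c) = A y u := by simp [hA, hu]
      have h2 := Ring.inverse_mul_cancel _ (hball y hy).2.2
      have h3 : w y = u := by
        simp only [hw, h1]
        exact DFunLike.congr_fun h2 u
      rw [h3, hu]
    have hwd : ∀ y ∈ Metric.ball x₀ ε, DifferentiableAt ℝ w y := by
      intro y hy
      have hTy := (hball y hy).1.1
      have h0 : DifferentiableAt ℝ (fun B : W →L[ℝ] W => Ring.inverse B) (A y) :=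
        differentiableAt_inverse (𝕜 := ℝ) (R := W →L[ℝ] W) (x := A y) (hball y hy).2.2
      have h1 : DifferentiableAt ℝ (fun x => Ring.inverse (A x)) y :=
        DifferentiableAt.comp (𝕜 := ℝ) (g := fun B : W →L[ℝ] W => Ring.inverse B) (f := A) y
          h0 (hAd y hTy)
      exact h1.clm_apply
        ((differentiableAt_const L).clm_apply (hTy.clm_apply (differentiableAt_const c)))
    have hw0 : ∀ y ∈ Metric.ball x₀ ε, fderiv ℝ w y = 0 := by
      intro y hy
      have hTy := (hball y hy).1.1.hasFDerivAt
      have hwy := W.subtypeL.hasFDerivAt.comp y (hwd y hy).hasFDerivAt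
      have d1 := hTy.clm_apply (hasFDerivAt_const c y)
      have d2 := hTy.clm_apply hwy
      have heq : (fun y => T y c) =ᶠ[𝓝 y] fun y => T y (w y) := by
        filter_upwards [Metric.isOpen_ball.mem_nhds hy] with z hz using hTw z hz
      have d3 := d1.unique (d2.congr_of_eventuallyEq heq)
      ext1 v
      have d4 := DFunLike.congr_fun d3 v
      have hker := (hball y hy).2.1 v (c - w y) (by rw [map_sub, hTw y hy, sub_self])
      rw [map_sub, sub_eq_zero] at hker
      refine hinj y hy _ ?_
      simpa [hker] using d4
    have hconst : w x = w x₀ :=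
      Metric.isOpen_ball.is_const_of_fderiv_eq_zero (convex_ball x₀ ε).isPreconnected
        (fun y hy => (hwd y hy).differentiableWithinAt) hw0 hx (Metric.mem_ball_self hε)
    have h0 : w x₀ = 0 := by simp [hw, hc₀]
    change T x c = 0
    rw [hTw x hx, hconst, h0]
    simp
  filter_upwards [Metric.ball_mem_nhds x₀ hε] with x hx
  refine Submodule.eq_of_le_of_finrank_eq (hle x hx) ?_
  have e3 := LinearMap.finrank_range_add_finrank_ker (T x₀ : E →ₗ[ℝ] F)
  have e4 := LinearMap.finrank_range_add_finrank_ker (T x : E →ₗ[ℝ] F)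
  have e5 := (hball x hx).1.2
  omega

/-- if `M : Ξ → ℝ^{r×d̄}` is smooth of constant rank on the open connected
set `Ξ ⊆ ℝᵐ` and every row of each partial derivative `∂_{ξʲ}M(ξ)` lies in the row space
of `M(ξ)`, then the kernel `{c : M(ξ)·c = 0}` is the same subspace of `ℝ^d̄` for all
`ξ ∈ Ξ`. -/
theorem stmt2 (m r dbar : ℕ)
    (Ξ : Set (Fin m → ℝ)) (hΞo : IsOpen Ξ) (hΞc : IsConnected Ξ)
    (M : (Fin m → ℝ) → Matrix (Fin r) (Fin dbar) ℝ)
    (hsmooth : ∀ (i : Fin r) (k : Fin dbar), ContDiffOn ℝ (⊤ : ℕ∞) (fun ξ => M ξ i k) Ξ)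
    (hrank : ∀ ξ ∈ Ξ, ∀ ξ' ∈ Ξ, (M ξ).rank = (M ξ').rank)
    (hrows : ∀ j : Fin m, ∀ ξ ∈ Ξ, ∀ i : Fin r,
      (fun k => fderiv ℝ (fun η => M η i k) ξ (Pi.single j 1)) ∈
        Submodule.span ℝ (Set.range fun i' => M ξ i')) :
    ∀ ξ ∈ Ξ, ∀ ξ' ∈ Ξ,
      LinearMap.ker (M ξ).mulVecLin = LinearMap.ker (M ξ').mulVecLin := by
  set T : (Fin m → ℝ) → ((Fin dbar → ℝ) →L[ℝ] (Fin r → ℝ)) :=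
    fun ξ => LinearMap.toContinuousLinearMap (M ξ).mulVecLin with hT
  have hTi : ∀ ξ c i, T ξ c i = ∑ k, M ξ i k * c k := fun ξ c i => rfl
  have hMd : ∀ ξ ∈ Ξ, ∀ i k, DifferentiableAt ℝ (fun ξ => M ξ i k) ξ := fun ξ hξ i k =>
    ((hsmooth i k).differentiableOn (by simp)).differentiableAt (hΞo.mem_nhds hξ)
  have hTd : ∀ ξ ∈ Ξ, DifferentiableAt ℝ T ξ := by
    have : ContDiffOn ℝ (⊤ : ℕ∞) T Ξ := by
      rw [contDiffOn_clm_apply]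
      intro c
      rw [contDiffOn_pi]
      intro i
      simp only [hTi]
      exact ContDiffOn.sum fun k _ => (hsmooth i k).mul contDiffOn_const
    exact fun ξ hξ => (this.differentiableOn (by simp)).differentiableAt (hΞo.mem_nhds hξ)
  have hfd : ∀ ξ ∈ Ξ, ∀ v c i,
      fderiv ℝ T ξ v c i = ∑ k, fderiv ℝ (fun η => M η i k) ξ v * c k := by
    intro ξ hξ v c i
    have d1 := hasFDerivAt_pi'.1 ((hTd ξ hξ).hasFDerivAt.clm_apply (hasFDerivAt_const c ξ)) i
    have d2 : HasFDerivAt (fun ξ => T ξ c i)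
        (∑ k, c k • fderiv ℝ (fun η => M η i k) ξ) ξ := by
      simp only [hTi]
      exact HasFDerivAt.fun_sum fun k _ => (hMd ξ hξ i k).hasFDerivAt.mul_const (c k)
    have := DFunLike.congr_fun (d1.unique d2) v
    simpa [mul_comm] using this
  -- A row in the row space of `M ξ` annihilates the kernel of `M ξ`.
  have hk : ∀ ξ ∈ Ξ, ∀ v c, T ξ c = 0 → fderiv ℝ T ξ v c = 0 := by
    intro ξ hξ v c hc
    have hbasis : ∀ j : Fin m, fderiv ℝ T ξ (Pi.single j 1) c = 0 := by
      intro j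
      ext i
      rw [hfd ξ hξ]
      have hspan : Submodule.span ℝ (Set.range fun i' => M ξ i') ≤
          LinearMap.ker ((dotProductBilin ℝ ℝ).flip c : (Fin dbar → ℝ) →ₗ[ℝ] ℝ) := by
        rw [Submodule.span_le]
        rintro _ ⟨i', rfl⟩
        exact congrFun hc i'
      exact hspan (hrows j ξ hξ i)
    rw [pi_eq_sum_univ' v]
    simp [map_sum, hbasis]
  refine fun ξ hξ ξ' hξ' => hΞc.isPreconnected.induction₂
    (fun x y => LinearMap.ker (M x).mulVecLin = LinearMap.ker (M y).mulVecLin)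
    ?_ (fun _ _ _ _ _ _ => Eq.trans) (fun _ _ _ _ => Eq.symm) hξ hξ'
  intro x hx
  have hn := hΞo.mem_nhds hx
  refine Filter.Eventually.filter_mono nhdsWithin_le_nhds ?_
  exact eventually_ker_eq T x (Filter.mem_of_superset hn hTd)
    (Filter.mem_of_superset hn fun y hy => hrank y hy x hx) (Filter.mem_of_superset hn hk)
end

section
/- Let q = d̄ − rank(M) and let c₁(θ),…,c_q(θ) be smooth ℝ^d̄-valued functions of θ alone whose values at every point form a basis of ker M (which is independent of ξ). Set v̄_r = Σ_{k=1}^{d̄} c_r^k(θ)·v_k for r = 1,…,q and define D̄(p) = span{v̄₁(p),…,v̄_q(p), v_{d̄+1}(p),…,v_d(p)}. Then D̄ is a projectable subdistribution of D of constant dimension q + (d − d̄) (its listed spanning fields are projectable and pointwise linearly independent), and D̄ is the largest projectable subdistribution of D: every projectable vector field w on U with w(p) ∈ D(p) for all p ∈ U satisfies w(p) ∈ D̄(p) for all p ∈ U. -/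
/-!
Fix `θ` and constants `C : Fin d̄ → ℝ`. The whole argument rests on the functions
`ξ ↦ ∑ₖ Cₖ aₖⁱ(θ, ξ)` on the connected open set `Ξ`, which are the non-normalized
`θ`-components of `∑ₖ Cₖ vₖ`.

If `C ∈ ker M`, then `C` annihilates every first-order derivative `∂_{ξʲ} aⁱ`, as these lie in the
row space of `M`; so the functions have zero derivative and are constant in `ξ`
(`const_of_annihilates`). Hence the fields `v̄_r` are projectable.

Conversely, if the functions are constant in `ξ`, then differentiating repeatedly shows that `C`
annihilates every iterated `ξ`-derivative of the `aⁱ` (`annihilates_of_const`), in particular every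
row of `M`, so `C ∈ ker M`. For a projectable `w = ∑ₖ αₖ vₖ + ∑ₗ βₗ vₗ` in `D`, the normal form of
the `vₖ` gives `αₖ = w^{θᵏ}`, which depends on `θ` only; so this applies with `C = α(θ)` and puts
`α(θ)` into the span of the `c_r(θ)`, that is, `w` into `D̄`.
-/

open scoped BigOperators

/-- The normalized vector field
`v_l = Σ_{j=1}^{m−d+d̄} b_l^j ∂_{ξʲ} + ∂_{ξ^{m−d+l}}` (0-based indices). -/
noncomputable def vL {n m : ℕ} (dbar d : ℕ)
    (bl : Fin (d - dbar) → Fin m → Pt n m → ℝ)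
    (l : Fin (d - dbar)) (p : Pt n m) : Pt n m :=
  (0, fun j => if (j : ℕ) < m - (d - dbar) then bl l j p
      else if (j : ℕ) = m - (d - dbar) + (l : ℕ) then 1 else 0)

/-- Iterated `ξ`-derivatives of a smooth function on an open set are smooth there. -/
lemma xiDerivs_contDiffOn {n m : ℕ} {U : Set (Pt n m)} (hU : IsOpen U) {g : Pt n m → ℝ}
    (hg : ContDiffOn ℝ (⊤ : ℕ∞) g U) (js : List (Fin m)) :
    ContDiffOn ℝ (⊤ : ℕ∞) (xiDerivs js g) U := by
  induction js with
  | nil => exact hg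
  | cons j js ih =>
    exact (ih.fderiv_of_isOpen hU (by exact_mod_cast le_top)).clm_apply contDiffOn_const

/-- At fixed `θ`, the `ξ`-derivative of a constant-coefficient combination, in terms of full
derivatives. -/
lemma hasFDerivAt_slice {n m N : ℕ} {U : Set (Pt n m)} (hU : IsOpen U)
    {f : Fin N → Pt n m → ℝ} (hf : ∀ k, ContDiffOn ℝ (⊤ : ℕ∞) (f k) U) (C : Fin N → ℝ)
    {θ : Fin n → ℝ} {ξ : Fin m → ℝ} (hp : (θ, ξ) ∈ U) :
    HasFDerivAt (fun x : Fin m → ℝ => ∑ k, C k * f k (θ, x))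
      (∑ k, C k • (fderiv ℝ (f k) (θ, ξ)).comp (ContinuousLinearMap.inr ℝ (Fin n → ℝ) (Fin m → ℝ)))
      ξ := by
  refine HasFDerivAt.fun_sum fun k _ => HasFDerivAt.const_mul ?_ _
  have h : HasFDerivAt (f k) (fderiv ℝ (f k) (θ, ξ)) (θ, ξ) :=
    (((hf k).contDiffAt (hU.mem_nhds hp)).differentiableAt (by simp)).hasFDerivAt
  exact h.comp ξ (hasFDerivAt_prodMk_right θ ξ)

/-- A combination whose coefficients annihilate all first-order `ξ`-derivatives is constant
in `ξ`. -/
lemma const_of_annihilates {n m N : ℕ} {Θ : Set (Fin n → ℝ)} {Ξ : Set (Fin m → ℝ)}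
    (hΘo : IsOpen Θ) (hΞo : IsOpen Ξ) (hΞc : IsConnected Ξ)
    {f : Fin N → Pt n m → ℝ} (hf : ∀ k, ContDiffOn ℝ (⊤ : ℕ∞) (f k) (Θ ×ˢ Ξ)) (C : Fin N → ℝ)
    {θ : Fin n → ℝ} (hθ : θ ∈ Θ)
    (h0 : ∀ ξ ∈ Ξ, ∀ j, ∑ k, C k * xiDerivs [j] (f k) (θ, ξ) = 0) :
    ∀ ξ ∈ Ξ, ∀ ξ' ∈ Ξ, ∑ k, C k * f k (θ, ξ) = ∑ k, C k * f k (θ, ξ') := by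
  have hd := fun ξ (hξ : ξ ∈ Ξ) => hasFDerivAt_slice (hΘo.prod hΞo) hf C (Set.mk_mem_prod hθ hξ)
  intro ξ hξ ξ' hξ'
  refine hΞo.is_const_of_fderiv_eq_zero (𝕜 := ℝ) (f := fun x => ∑ k, C k * f k (θ, x))
    hΞc.isPreconnected
    (fun x hx => (hd x hx).differentiableAt.differentiableWithinAt) (fun x hx => ?_) hξ hξ'
  rw [(hd x hx).fderiv]
  apply ContinuousLinearMap.coe_injective
  refine LinearMap.pi_ext' fun j => LinearMap.ext_ring ?_
  simpa [xiDerivs] using h0 x hx j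

/-- The coefficients of a combination constant in `ξ` annihilate all iterated `ξ`-derivatives. -/
lemma annihilates_of_const {n m N : ℕ} {Θ : Set (Fin n → ℝ)} {Ξ : Set (Fin m → ℝ)}
    (hΘo : IsOpen Θ) (hΞo : IsOpen Ξ)
    {f : Fin N → Pt n m → ℝ} (hf : ∀ k, ContDiffOn ℝ (⊤ : ℕ∞) (f k) (Θ ×ˢ Ξ)) (C : Fin N → ℝ)
    {θ : Fin n → ℝ} (hθ : θ ∈ Θ)
    (hc : ∀ ξ ∈ Ξ, ∀ ξ' ∈ Ξ, ∑ k, C k * f k (θ, ξ) = ∑ k, C k * f k (θ, ξ'))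
    {js : List (Fin m)} (hjs : js ≠ []) :
    ∀ ξ ∈ Ξ, ∑ k, C k * xiDerivs js (f k) (θ, ξ) = 0 := by
  have step : ∀ (j : Fin m) (js : List (Fin m)),
      (∀ ξ ∈ Ξ, ∀ ξ' ∈ Ξ, ∑ k, C k * xiDerivs js (f k) (θ, ξ)
        = ∑ k, C k * xiDerivs js (f k) (θ, ξ')) →
      ∀ ξ ∈ Ξ, ∑ k, C k * xiDerivs (j :: js) (f k) (θ, ξ) = 0 := by
    intro j js h ξ hξ
    have hd := hasFDerivAt_slice (hΘo.prod hΞo)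
      (fun k => xiDerivs_contDiffOn (hΘo.prod hΞo) (hf k) js) C (Set.mk_mem_prod hθ hξ)
    have hz : HasFDerivAt (fun x : Fin m → ℝ => ∑ k, C k * xiDerivs js (f k) (θ, x))
        (0 : (Fin m → ℝ) →L[ℝ] ℝ) ξ := by
      refine (hasFDerivAt_const (∑ k, C k * xiDerivs js (f k) (θ, ξ)) ξ).congr_of_eventuallyEq ?_
      filter_upwards [hΞo.mem_nhds hξ] with x hx using h x hx ξ hξ
    simpa [xiDerivs] using congrArg (fun L => L (Pi.single j 1)) (hd.unique hz)
  induction js with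
  | nil => exact absurd rfl hjs
  | cons j js ih =>
    refine step j js ?_
    rcases eq_or_ne js [] with rfl | h
    · exact hc
    · intro ξ hξ ξ' hξ'
      rw [ih h ξ hξ, ih h ξ' hξ']

/-- The `θ`-components of `∑ₖ Cₖ vₖ`. -/
lemma sum_vK_fst {n m : ℕ} (dbar d : ℕ)
    (a : Fin dbar → Fin n → Pt n m → ℝ) (b : Fin dbar → Fin m → Pt n m → ℝ)
    (C : Fin dbar → ℝ) (p : Pt n m) (i : Fin n) :
    (∑ k, C k • vK dbar d a b k p).1 i
      = if h : (i : ℕ) < dbar then C ⟨i, h⟩ else ∑ k, C k * a k i p := by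
  rw [Prod.fst_sum, Finset.sum_apply]
  split_ifs with h
  · rw [Finset.sum_eq_single ⟨i, h⟩]
    · simp [vK, h]
    · intro k _ hk
      have : (i : ℕ) ≠ k := fun e => hk (Fin.ext e.symm)
      simp [vK, h, this]
    · simp
  · simp [vK, h]

/-- A vector annihilated by a family of row vectors is annihilated by their span. -/
lemma sum_mul_eq_zero_of_mem_span {N r : ℕ} {R : Fin r → Fin N → ℝ} {C : Fin N → ℝ}
    (hC : ∀ i, ∑ k, R i k * C k = 0) {x : Fin N → ℝ}
    (hx : x ∈ Submodule.span ℝ (Set.range R)) : ∑ k, C k * x k = 0 := by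
  induction hx using Submodule.span_induction with
  | mem x h =>
    obtain ⟨i, rfl⟩ := h
    rw [← hC i]
    exact Finset.sum_congr rfl fun k _ => mul_comm _ _
  | zero => simp
  | add x y _ _ hx hy => simp [mul_add, Finset.sum_add_distrib, hx, hy]
  | smul t x _ hx =>
    have : ∑ k, C k * (t • x) k = t * ∑ k, C k * x k := by
      rw [Finset.mul_sum]
      exact Finset.sum_congr rfl fun k _ => by simp; ring
    rw [this, hx, mul_zero]

/-- with `q = d̄ − rank M` and `c₁(θ),…,c_q(θ)` a smooth pointwise basis of
`ker M`, the fields `v̄_r = Σ_k c_r^k(θ) v_k` together with `v_{d̄+1},…,v_d` are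
projectable and pointwise linearly independent; `D̄ = span{v̄₁,…,v̄_q,v_{d̄+1},…,v_d}` is
a subdistribution of `D` of constant dimension `q + (d−d̄)`, and every projectable vector
field lying pointwise in `D` lies pointwise in `D̄`. -/
theorem stmt3 (n m dbar d : ℕ) (hn : 1 ≤ n) (hm : 1 ≤ m)
    (hdd : dbar ≤ d) (hdn : dbar ≤ n) (hdm : d - dbar ≤ m)
    (Θ : Set (Fin n → ℝ)) (Ξ : Set (Fin m → ℝ))
    (hΘo : IsOpen Θ) (hΘc : IsConnected Θ) (hΞo : IsOpen Ξ) (hΞc : IsConnected Ξ)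
    (a : Fin dbar → Fin n → Pt n m → ℝ)
    (b : Fin dbar → Fin m → Pt n m → ℝ)
    (bl : Fin (d - dbar) → Fin m → Pt n m → ℝ)
    (ha : ∀ k i, ContDiffOn ℝ (⊤ : ℕ∞) (a k i) (Θ ×ˢ Ξ))
    (hb : ∀ k j, ContDiffOn ℝ (⊤ : ℕ∞) (b k j) (Θ ×ˢ Ξ))
    (hbl : ∀ l j, ContDiffOn ℝ (⊤ : ℕ∞) (bl l j) (Θ ×ˢ Ξ))
    (hindep : ∀ p ∈ Θ ×ˢ Ξ, LinearIndependent ℝ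
      (Sum.elim (fun k => vK dbar d a b k p) (fun l => vL dbar d bl l p)))
    -- the matrix M and its constant rank rk
    (r rk : ℕ) (Mrow : Fin r → Pt n m → Fin dbar → ℝ)
    (hMrows : ∀ i : Fin r, ∃ (js : List (Fin m)) (ib : Fin n), js ≠ [] ∧ dbar ≤ (ib : ℕ) ∧
      ∀ p k, Mrow i p k = xiDerivs js (fun q => a k ib q) p)
    (hMrank : ∀ p ∈ Θ ×ˢ Ξ, (Matrix.of fun i k => Mrow i p k).rank = rk)
    (hMspan : ∀ (js : List (Fin m)), js ≠ [] → ∀ ib : Fin n, dbar ≤ (ib : ℕ) →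
      ∀ p ∈ Θ ×ˢ Ξ, (fun k => xiDerivs js (fun q => a k ib q) p) ∈
        Submodule.span ℝ (Set.range fun i => Mrow i p))
    -- the smooth pointwise basis c₁(θ),…,c_q(θ) of ker M (independent of ξ)
    (c : Fin (dbar - rk) → (Fin n → ℝ) → Fin dbar → ℝ)
    (hcsmooth : ∀ r' k, ContDiffOn ℝ (⊤ : ℕ∞) (fun θ => c r' θ k) Θ)
    (hcindep : ∀ p ∈ Θ ×ˢ Ξ, LinearIndependent ℝ fun r' => c r' p.1)
    (hcspan : ∀ p ∈ Θ ×ˢ Ξ, Submodule.span ℝ (Set.range fun r' => c r' p.1)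
      = LinearMap.ker (Matrix.of fun i k => Mrow i p k).mulVecLin) :
    -- the listed spanning fields of D̄ are projectable
    ((∀ r', ProjOn Θ Ξ fun p => ∑ k, c r' p.1 k • vK dbar d a b k p) ∧
      (∀ l, ProjOn Θ Ξ (vL dbar d bl l))) ∧
    -- and pointwise linearly independent
    (∀ p ∈ Θ ×ˢ Ξ, LinearIndependent ℝ (Sum.elim
      (fun r' : Fin (dbar - rk) => ∑ k, c r' p.1 k • vK dbar d a b k p)
      (fun l => vL dbar d bl l p))) ∧
    -- D̄ is a subdistribution of D of constant dimension q + (d − d̄)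
    (∀ p ∈ Θ ×ˢ Ξ,
      Submodule.span ℝ (Set.range (Sum.elim
          (fun r' : Fin (dbar - rk) => ∑ k, c r' p.1 k • vK dbar d a b k p)
          (fun l => vL dbar d bl l p)))
        ≤ Submodule.span ℝ (Set.range (Sum.elim
            (fun k => vK dbar d a b k p) (fun l => vL dbar d bl l p)))) ∧
    (∀ p ∈ Θ ×ˢ Ξ,
      Module.finrank ℝ (Submodule.span ℝ (Set.range (Sum.elim
          (fun r' : Fin (dbar - rk) => ∑ k, c r' p.1 k • vK dbar d a b k p)
          (fun l => vL dbar d bl l p)))) = (dbar - rk) + (d - dbar)) ∧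
    -- D̄ is the largest projectable subdistribution of D
    (∀ w : Pt n m → Pt n m, ContDiffOn ℝ (⊤ : ℕ∞) w (Θ ×ˢ Ξ) → ProjOn Θ Ξ w →
      (∀ p ∈ Θ ×ˢ Ξ, w p ∈ Submodule.span ℝ (Set.range (Sum.elim
          (fun k => vK dbar d a b k p) (fun l => vL dbar d bl l p)))) →
      ∀ p ∈ Θ ×ˢ Ξ, w p ∈ Submodule.span ℝ (Set.range (Sum.elim
          (fun r' : Fin (dbar - rk) => ∑ k, c r' p.1 k • vK dbar d a b k p)
          (fun l => vL dbar d bl l p)))) := by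
  have hker : ∀ p ∈ Θ ×ˢ Ξ, ∀ C : Fin dbar → ℝ,
      C ∈ Submodule.span ℝ (Set.range fun r' => c r' p.1) ↔
        ∀ i, ∑ k, Mrow i p k * C k = 0 := by
    intro p hp C
    rw [hcspan p hp, LinearMap.mem_ker, funext_iff]
    rfl
  have hswap : ∀ (p : Pt n m) (g : Fin (dbar - rk) → ℝ),
      ∑ r', g r' • ∑ k, c r' p.1 k • vK dbar d a b k p
        = ∑ k, (∑ r', g r' * c r' p.1 k) • vK dbar d a b k p := by
    intro p g
    simp_rw [Finset.smul_sum, Finset.sum_smul, smul_smul]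
    exact Finset.sum_comm
  have hli : ∀ p ∈ Θ ×ˢ Ξ, LinearIndependent ℝ (Sum.elim
      (fun r' : Fin (dbar - rk) => ∑ k, c r' p.1 k • vK dbar d a b k p)
      (fun l => vL dbar d bl l p)) := by
    intro p hp
    rw [Fintype.linearIndependent_iff]
    intro g hg
    have h1 := Fintype.linearIndependent_iff.1 (hindep p hp)
      (Sum.elim (fun k => ∑ r', g (Sum.inl r') * c r' p.1 k) (fun l => g (Sum.inr l)))
    simp only [Fintype.sum_sum_type, Sum.elim_inl, Sum.elim_inr] at hg h1
    rw [hswap p (fun r' => g (Sum.inl r'))] at hg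
    have h2 := h1 hg
    have h3 := Fintype.linearIndependent_iff.1 (hcindep p hp) (fun r' => g (Sum.inl r')) (by
      ext k
      simpa using h2 (Sum.inl k))
    rintro (i | l)
    · exact h3 i
    · simpa using h2 (Sum.inr l)
  refine ⟨⟨fun r' θ hθ ξ hξ ξ' hξ' => ?_, fun l θ _ ξ _ ξ' _ => rfl⟩, hli, fun p hp => ?_,
    fun p hp => ?_, fun w _ hw hwD p hp => ?_⟩
  · ext i
    simp only [sum_vK_fst]
    split_ifs with h
    · rfl
    · refine const_of_annihilates hΘo hΞo hΞc (fun k => ha k i) (c r' θ) hθ (fun x hx j => ?_)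
        ξ hξ ξ' hξ'
      have hp : (θ, x) ∈ Θ ×ˢ Ξ := Set.mk_mem_prod hθ hx
      exact sum_mul_eq_zero_of_mem_span
        ((hker _ hp _).1 (Submodule.subset_span (Set.mem_range_self r')))
        (hMspan [j] (by simp) i (not_lt.1 h) _ hp)
  · rw [Submodule.span_le]
    rintro _ ⟨i | l, rfl⟩
    · exact Submodule.sum_mem _ fun k _ => Submodule.smul_mem _ _
        (Submodule.subset_span ⟨Sum.inl k, rfl⟩)
    · exact Submodule.subset_span ⟨Sum.inr l, rfl⟩
  · rw [finrank_span_eq_card (hli p hp)]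
    simp
  · obtain ⟨θ, ξ⟩ := p
    obtain ⟨hθ, hξ⟩ : θ ∈ Θ ∧ ξ ∈ Ξ := hp
    let C : Fin dbar → ℝ := fun k => (w (θ, ξ)).1 ⟨k, k.2.trans_le hdn⟩
    -- The normal form identifies the `vₖ`-coefficients of `w` over all of `{θ} × Ξ` with `C`.
    have hrep : ∀ x ∈ Ξ, ∃ β : Fin (d - dbar) → ℝ,
        w (θ, x) = ∑ k, C k • vK dbar d a b k (θ, x) + ∑ l, β l • vL dbar d bl l (θ, x) := by
      intro x hx
      obtain ⟨g, hg⟩ := (Submodule.mem_span_range_iff_exists_fun ℝ).1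
        (hwD (θ, x) (Set.mk_mem_prod hθ hx))
      simp only [Fintype.sum_sum_type, Sum.elim_inl, Sum.elim_inr] at hg
      refine ⟨fun l => g (Sum.inr l), ?_⟩
      have : C = fun k => g (Sum.inl k) := by
        ext k
        have h1 := congrArg (fun v : Pt n m => v.1 ⟨k, k.2.trans_le hdn⟩) hg
        simp only [Prod.fst_add, Pi.add_apply, sum_vK_fst dbar d a b (fun k => g (Sum.inl k))] at h1
        simp only [Prod.fst_sum, Prod.smul_fst, vL, smul_zero, Finset.sum_const_zero,
          Pi.zero_apply, add_zero, k.2, dite_true] at h1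
        rw [h1, ← hw θ hθ ξ hξ x hx]
      rw [this]
      exact hg.symm
    have hcomp : ∀ i : Fin n, dbar ≤ (i : ℕ) → ∀ x ∈ Ξ,
        ∑ k, C k * a k i (θ, x) = (w (θ, ξ)).1 i := by
      intro i hi x hx
      obtain ⟨β, hβ⟩ := hrep x hx
      rw [hw θ hθ ξ hξ x hx, hβ, Prod.fst_add, Pi.add_apply, sum_vK_fst, dif_neg (not_lt.2 hi)]
      simp [Prod.fst_sum, vL]
    have hC : C ∈ Submodule.span ℝ (Set.range fun r' => c r' θ) := by
      refine (hker (θ, ξ) (Set.mk_mem_prod hθ hξ) C).2 fun i => ?_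
      obtain ⟨js, ib, hjs, hib, hM⟩ := hMrows i
      have h0 := annihilates_of_const hΘo hΞo (fun k => ha k ib) C hθ
        (fun x hx x' hx' => (hcomp ib hib x hx).trans (hcomp ib hib x' hx').symm) hjs ξ hξ
      rw [← h0]
      exact Finset.sum_congr rfl fun k _ => by rw [hM, mul_comm]
    obtain ⟨g, hg⟩ := (Submodule.mem_span_range_iff_exists_fun ℝ).1 hC
    obtain ⟨β, hβ⟩ := hrep ξ hξ
    refine (Submodule.mem_span_range_iff_exists_fun ℝ).2 ⟨Sum.elim g β, ?_⟩
    simp only [Fintype.sum_sum_type, Sum.elim_inl, Sum.elim_inr]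
    rw [hβ, hswap (θ, ξ) g, ← hg]
    simp
end

section
/- Every covector in P̂(p) annihilates every vector in D̄(p), for every point p ∈ U; that is, the largest projectable subdistribution D̄ of D and the smallest span{∂_ξ}-invariant codistribution P̂ containing D^⊥ ∩ span{dθ} satisfy D̄ ⌟ P̂ = 0. -/
/-!
Both families of covectors involve only the `dθⁱ`, so they vanish on the vertical fields `v_l`.
On `v_k` the form `ω^s` takes the value `-a_k^s + a_k^s = 0`, while `ρⁱ` takes the value
`-M̂ᵢₖ`. Hence `ρⁱ(∑ₖ cₖ v_k) = -(M̂ c)ᵢ`, which is zero because the rows of `M̂` are rows of `M`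
and `c ∈ ker M`. Bilinearity of the pairing extends this from the generators to the spans.
-/

open scoped BigOperators

/-- The covector `Σ αᵢ dθⁱ + Σ βⱼ dξʲ` in the dual space `(ℝⁿ×ℝᵐ)*`. -/
noncomputable def covec {n m : ℕ} (α : Fin n → ℝ) (β : Fin m → ℝ) :
    Module.Dual ℝ (Pt n m) :=
  (∑ i, α i • ((LinearMap.proj i).comp (LinearMap.fst ℝ (Fin n → ℝ) (Fin m → ℝ)))) +
  (∑ j, β j • ((LinearMap.proj j).comp (LinearMap.snd ℝ (Fin n → ℝ) (Fin m → ℝ))))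

/-- The normalized 1-form `ω^s = Σ_{k=1}^{d̄} α_k^s dθᵏ + dθ^{d̄+s}`. -/
noncomputable def omS {n m : ℕ} (dbar : ℕ) (α : Fin dbar → Fin n → Pt n m → ℝ)
    (s : Fin n) (p : Pt n m) : Module.Dual ℝ (Pt n m) :=
  covec (fun i => if h : (i : ℕ) < dbar then α ⟨(i : ℕ), h⟩ s p
      else if i = s then 1 else 0) 0

theorem covec_zero_apply {n m : ℕ} (α : Fin n → ℝ) (v : Pt n m) :
    covec α 0 v = ∑ i, α i * v.1 i := by
  simp [covec]

/-- The value of `∑ αᵢ dθⁱ` on `v_k`: the first `d̄` components of `v_k` select `α_k`, the others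
contribute through the coefficients `a_k`. -/
theorem covec_vK {n m dbar d : ℕ} (hdn : dbar ≤ n) (α : Fin n → ℝ)
    (a : Fin dbar → Fin n → Pt n m → ℝ) (b : Fin dbar → Fin m → Pt n m → ℝ)
    (k : Fin dbar) (p : Pt n m) :
    covec α 0 (vK dbar d a b k p) =
      α (Fin.castLE hdn k) + ∑ i : Fin n, if (i : ℕ) < dbar then 0 else α i * a k i p := by
  have hsel : α (Fin.castLE hdn k) = ∑ i : Fin n, if i = Fin.castLE hdn k then α i else 0 := by
    simp
  rw [covec_zero_apply, hsel, ← Finset.sum_add_distrib]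
  refine Finset.sum_congr rfl fun i _ => ?_
  have hk := k.isLt
  by_cases hi : (i : ℕ) < dbar
  · simp [vK, hi, Fin.ext_iff]
  · have hne : (i : ℕ) ≠ k := by omega
    simp [vK, hi, Fin.ext_iff, hne]

theorem covec_vL {n m dbar d : ℕ} (α : Fin n → ℝ)
    (bl : Fin (d - dbar) → Fin m → Pt n m → ℝ) (l : Fin (d - dbar)) (p : Pt n m) :
    covec α 0 (vL dbar d bl l p) = 0 := by
  simp [covec_zero_apply, vL]

theorem rho_vK {n m dbar d : ℕ} (hdn : dbar ≤ n) (w : Fin dbar → ℝ)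
    (a : Fin dbar → Fin n → Pt n m → ℝ) (b : Fin dbar → Fin m → Pt n m → ℝ)
    (k : Fin dbar) (p : Pt n m) :
    covec (fun i : Fin n => if h : (i : ℕ) < dbar then -(w ⟨(i : ℕ), h⟩) else 0) 0
      (vK dbar d a b k p) = -w k := by
  rw [covec_vK hdn, Finset.sum_eq_zero]
  · simp
  · intro i _
    split_ifs <;> simp

theorem omS_vK {n m dbar d : ℕ} (hdn : dbar ≤ n)
    (a : Fin dbar → Fin n → Pt n m → ℝ) (b : Fin dbar → Fin m → Pt n m → ℝ)
    (s : Fin n) (hs : dbar ≤ (s : ℕ)) (k : Fin dbar) (p : Pt n m) :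
    omS dbar (fun k i q => -(a k i q)) s p (vK dbar d a b k p) = 0 := by
  rw [omS, covec_vK hdn, Finset.sum_eq_single s]
  · simp [hs.not_gt]
  · intro i _ his
    by_cases hi : (i : ℕ) < dbar <;> simp [hi, his]
  · simp

/-- every covector in `P̂(p)` annihilates every vector in `D̄(p)`, i.e.
`D̄ ⌟ P̂ = 0` on `U`. -/
theorem stmt7 (n m dbar d : ℕ) (hn : 1 ≤ n) (hm : 1 ≤ m)
    (hdd : dbar ≤ d) (hdn : dbar ≤ n) (hdm : d - dbar ≤ m)
    (Θ : Set (Fin n → ℝ)) (Ξ : Set (Fin m → ℝ))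
    (hΘo : IsOpen Θ) (hΘc : IsConnected Θ) (hΞo : IsOpen Ξ) (hΞc : IsConnected Ξ)
    (a : Fin dbar → Fin n → Pt n m → ℝ)
    (b : Fin dbar → Fin m → Pt n m → ℝ)
    (bl : Fin (d - dbar) → Fin m → Pt n m → ℝ)
    (ha : ∀ k i, ContDiffOn ℝ (⊤ : ℕ∞) (a k i) (Θ ×ˢ Ξ))
    (hb : ∀ k j, ContDiffOn ℝ (⊤ : ℕ∞) (b k j) (Θ ×ˢ Ξ))
    (hbl : ∀ l j, ContDiffOn ℝ (⊤ : ℕ∞) (bl l j) (Θ ×ˢ Ξ))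
    -- the matrix M and its constant rank rk
    (r rk : ℕ) (Mrow : Fin r → Pt n m → Fin dbar → ℝ)
    (hMrows : ∀ i : Fin r, ∃ (js : List (Fin m)) (ib : Fin n), js ≠ [] ∧ dbar ≤ (ib : ℕ) ∧
      ∀ p k, Mrow i p k = xiDerivs js (fun q => a k ib q) p)
    (hMrank : ∀ p ∈ Θ ×ˢ Ξ, (Matrix.of fun i k => Mrow i p k).rank = rk)
    (hMspan : ∀ (js : List (Fin m)), js ≠ [] → ∀ ib : Fin n, dbar ≤ (ib : ℕ) →
      ∀ p ∈ Θ ×ˢ Ξ, (fun k => xiDerivs js (fun q => a k ib q) p) ∈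
        Submodule.span ℝ (Set.range fun i => Mrow i p))
    -- the smooth pointwise basis c₁(θ),…,c_q(θ) of ker M
    (c : Fin (dbar - rk) → (Fin n → ℝ) → Fin dbar → ℝ)
    (hcsmooth : ∀ r' k, ContDiffOn ℝ (⊤ : ℕ∞) (fun θ => c r' θ k) Θ)
    (hcindep : ∀ p ∈ Θ ×ˢ Ξ, LinearIndependent ℝ fun r' => c r' p.1)
    (hcspan : ∀ p ∈ Θ ×ˢ Ξ, Submodule.span ℝ (Set.range fun r' => c r' p.1)
      = LinearMap.ker (Matrix.of fun i k => Mrow i p k).mulVecLin)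
    -- M̂ : a maximal set of rows of M that are linearly independent at every point
    (Mhat : Fin rk → Pt n m → Fin dbar → ℝ)
    (hMhatRows : ∀ i : Fin rk, ∃ i' : Fin r, ∀ p, Mhat i p = Mrow i' p)
    (hMhatLI : ∀ p ∈ Θ ×ˢ Ξ, LinearIndependent ℝ fun i : Fin rk => Mhat i p) :
    ∀ p ∈ Θ ×ˢ Ξ,
      ∀ φ ∈ Submodule.span ℝ (Set.range (Sum.elim
          (fun i : Fin rk =>
            covec (fun iθ => if h : (iθ : ℕ) < dbar then -(Mhat i p ⟨(iθ : ℕ), h⟩) else 0)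
              (0 : Fin m → ℝ))
          (fun s : {s : Fin n // dbar ≤ (s : ℕ)} =>
            omS dbar (fun k i q => -(a k i q)) s.1 p))),
      ∀ v ∈ Submodule.span ℝ (Set.range (Sum.elim
          (fun r' : Fin (dbar - rk) => ∑ k, c r' p.1 k • vK dbar d a b k p)
          (fun l => vL dbar d bl l p))),
      φ v = 0 := by
  intro p hp φ hφ v hv
  have hMc : ∀ (i : Fin rk) (r' : Fin (dbar - rk)), ∑ k, c r' p.1 k * Mhat i p k = 0 := by
    intro i r'
    obtain ⟨i', hi'⟩ := hMhatRows i
    have hmem : c r' p.1 ∈ LinearMap.ker (Matrix.of fun i k => Mrow i p k).mulVecLin := by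
      rw [← hcspan p hp]
      exact Submodule.subset_span ⟨r', rfl⟩
    have h0 := congrFun (LinearMap.mem_ker.mp hmem) i'
    simpa [Matrix.mulVec, dotProduct, hi', mul_comm] using h0
  induction hφ using Submodule.span_induction with
  | zero => simp
  | add φ ψ _ _ hφ hψ => simp [hφ, hψ]
  | smul t φ _ hφ => simp [hφ]
  | mem φ hφ =>
    induction hv using Submodule.span_induction with
    | zero => simp
    | add v w _ _ hv hw => rw [map_add, hv, hw, add_zero]
    | smul t v _ hv => rw [map_smul, hv, smul_zero]
    | mem v hv =>
      obtain ⟨i | s, rfl⟩ := hφ <;> obtain ⟨r' | l, rfl⟩ := hv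
      · simp only [Sum.elim_inl, map_sum, map_smul, rho_vK hdn, smul_eq_mul, mul_neg,
          Finset.sum_neg_distrib, hMc, neg_zero]
      · exact covec_vL _ _ _ _
      · simp only [Sum.elim_inl, Sum.elim_inr, map_sum, map_smul, omS_vK hdn _ _ _ s.2, smul_zero,
          Finset.sum_const_zero]
      · exact covec_vL _ _ _ _
end

section
/- Since D̄ is spanned by projectable vector fields, the subspace Δ(θ) ⊆ ℝⁿ of θ-components of vectors in D̄(θ,ξ) is independent of ξ and defines a distribution on Θ of constant dimension q = d̄ − rank(M). For every point (θ,ξ) ∈ U one then has P̂(θ,ξ) = { (γ, 0) ∈ (ℝⁿ)* × (ℝᵐ)* : γ annihilates Δ(θ) }; in particular dim Δ(θ) + dim P̂(θ,ξ) = n. -/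
/-! Fix `p = (θ, ξ)` and let `L(p)` be the matrix of the `a_k^ī(p)`.  The graph map
`G_p : x ↦ (x, L(p) x)` from `ℝ^d̄` to `ℝⁿ` is injective, and the `θ`-component of `∑ xᵏ v_k` is
`G_p x`, so `Δ = G_p (ker M)` (`map_fst_DbarSpan`); this has dimension `d̄ - rank M`.

Independence of `ξ`: for a fixed `c_r(θ)`, the `ξ`-derivatives of `L(θ, ·) c_r(θ)` are products of
`c_r(θ) ∈ ker M` with vectors in the row space of `M`, hence zero, and `Ξ` is open and connected.
So `L(θ, ·) c_r(θ)` is constant on `Ξ` (`graphMap_eq_of_fiber`).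

The codistribution: a functional lies in the span of finitely many functionals iff it vanishes on
their common kernel.  The common kernel of the generators of `P̂` consists of the `(w, u)` with
`w = G_p x` and `M̂ x = 0`.  The rows of `M̂` are `rank M` independent rows of `M`, so
`ker M̂ = ker M` (`ker_rows_eq`), and the common kernel is `Δ × ℝᵐ` (`iInf_ker_gen`).  Hence `P̂` is
the injective image of the annihilator of `Δ` under the transpose of the projection
(`PhatSpan_eq_map`), which gives the dimension count. -/

open scoped BigOperators

/-- The distribution `D̄(p) = span{v̄₁(p),…,v̄_q(p),v_{d̄+1}(p),…,v_d(p)}`. -/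
noncomputable def DbarSpan {n m : ℕ} (dbar d rk : ℕ)
    (a : Fin dbar → Fin n → Pt n m → ℝ) (b : Fin dbar → Fin m → Pt n m → ℝ)
    (bl : Fin (d - dbar) → Fin m → Pt n m → ℝ)
    (c : Fin (dbar - rk) → (Fin n → ℝ) → Fin dbar → ℝ) (p : Pt n m) :
    Submodule ℝ (Pt n m) :=
  Submodule.span ℝ (Set.range (Sum.elim
    (fun r' : Fin (dbar - rk) => ∑ k, c r' p.1 k • vK dbar d a b k p)
    (fun l => vL dbar d bl l p)))

/-- The codistribution `P̂(p) = span{ρ¹(p),…,ρ^{rank M}(p),ω¹(p),…,ω^{n−d̄}(p)}`. -/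
noncomputable def PhatSpan {n m : ℕ} (dbar rk : ℕ)
    (a : Fin dbar → Fin n → Pt n m → ℝ)
    (Mhat : Fin rk → Pt n m → Fin dbar → ℝ) (p : Pt n m) :
    Submodule ℝ (Module.Dual ℝ (Pt n m)) :=
  Submodule.span ℝ (Set.range (Sum.elim
    (fun i : Fin rk =>
      covec (fun iθ => if h : (iθ : ℕ) < dbar then -(Mhat i p ⟨(iθ : ℕ), h⟩) else 0)
        (0 : Fin m → ℝ))
    (fun s : {s : Fin n // dbar ≤ (s : ℕ)} =>
      omS dbar (fun k i q => -(a k i q)) s.1 p)))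

lemma covec_apply {n m : ℕ} (α : Fin n → ℝ) (β : Fin m → ℝ) (x : Pt n m) :
    covec α β x = ∑ i, α i * x.1 i + ∑ j, β j * x.2 j := by
  simp [covec]

/-! ### The graph of `L(p)` and the projected distribution `Δ` -/

/-- The graph map `x ↦ (x, L(p) x)`, where the row of `L(p)` with index `i ≥ d̄` is
`k ↦ a k i p`. -/
noncomputable def graphMap {n m : ℕ} (dbar : ℕ) (a : Fin dbar → Fin n → Pt n m → ℝ) (p : Pt n m) :
    (Fin dbar → ℝ) →ₗ[ℝ] (Fin n → ℝ) :=
  LinearMap.pi fun i =>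
    if h : (i : ℕ) < dbar then LinearMap.proj ⟨(i : ℕ), h⟩
    else ∑ k, a k i p • LinearMap.proj k

lemma graphMap_apply_lt {n m dbar : ℕ} (a : Fin dbar → Fin n → Pt n m → ℝ) (p : Pt n m)
    (x : Fin dbar → ℝ) (i : Fin n) (h : (i : ℕ) < dbar) :
    graphMap dbar a p x i = x ⟨i, h⟩ := by
  simp [graphMap, h]

lemma graphMap_apply_ge {n m dbar : ℕ} (a : Fin dbar → Fin n → Pt n m → ℝ) (p : Pt n m)
    (x : Fin dbar → ℝ) (i : Fin n) (h : ¬ (i : ℕ) < dbar) :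
    graphMap dbar a p x i = ∑ k, a k i p * x k := by
  simp [graphMap, h]

lemma graphMap_injective {n m dbar : ℕ} (hdn : dbar ≤ n) (a : Fin dbar → Fin n → Pt n m → ℝ)
    (p : Pt n m) : Function.Injective (graphMap dbar a p) := by
  intro x y hxy
  funext k
  have h := congrFun hxy (Fin.castLE hdn k)
  have hk : ((Fin.castLE hdn k : Fin n) : ℕ) < dbar := k.2
  rwa [graphMap_apply_lt _ _ _ _ hk, graphMap_apply_lt _ _ _ _ hk] at h

lemma fst_sum_vK {n m dbar : ℕ} (d : ℕ) (a : Fin dbar → Fin n → Pt n m → ℝ)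
    (b : Fin dbar → Fin m → Pt n m → ℝ) (p : Pt n m) (x : Fin dbar → ℝ) :
    (∑ k, x k • vK dbar d a b k p).1 = graphMap dbar a p x := by
  funext i
  rw [Prod.fst_sum, Finset.sum_apply]
  by_cases h : (i : ℕ) < dbar
  · rw [graphMap_apply_lt _ _ _ _ h, Finset.sum_eq_single ⟨(i : ℕ), h⟩]
    · simp [vK, h]
    · intro k _ hk
      have : ¬ (i : ℕ) = k := fun e => hk (Fin.ext e.symm)
      simp [vK, h, this]
    · simp
  · rw [graphMap_apply_ge _ _ _ _ h]
    simp [vK, h, mul_comm]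

/-- `Δ` is the image of `span {c_r(θ)}` under the graph map. -/
lemma map_fst_DbarSpan {n m dbar : ℕ} (d rk : ℕ) (a : Fin dbar → Fin n → Pt n m → ℝ)
    (b : Fin dbar → Fin m → Pt n m → ℝ) (bl : Fin (d - dbar) → Fin m → Pt n m → ℝ)
    (c : Fin (dbar - rk) → (Fin n → ℝ) → Fin dbar → ℝ) (p : Pt n m) :
    Submodule.map (LinearMap.fst ℝ (Fin n → ℝ) (Fin m → ℝ)) (DbarSpan dbar d rk a b bl c p)
      = Submodule.map (graphMap dbar a p) (Submodule.span ℝ (Set.range fun r' => c r' p.1)) := by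
  rw [DbarSpan, Submodule.map_span, Submodule.map_span, ← Set.range_comp, ← Set.range_comp]
  apply le_antisymm <;> rw [Submodule.span_le] <;> rintro _ ⟨i, rfl⟩
  · rcases i with r' | l
    · refine Submodule.subset_span ⟨r', ?_⟩
      exact (fst_sum_vK d a b p (c r' p.1)).symm
    · exact Submodule.zero_mem _
  · refine Submodule.subset_span ⟨Sum.inl i, ?_⟩
    exact fst_sum_vK d a b p (c i p.1)

/-- If `y` is killed by all first `ξ`-derivatives of the rows of `L` along the fibre over `θ`,
then `(y, L y)` takes the same value at all points of that fibre. -/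
lemma graphMap_eq_of_fiber {n m dbar : ℕ} {Θ : Set (Fin n → ℝ)} {Ξ : Set (Fin m → ℝ)}
    (hΘo : IsOpen Θ) (hΞo : IsOpen Ξ) (hΞc : IsConnected Ξ)
    (a : Fin dbar → Fin n → Pt n m → ℝ)
    (ha : ∀ k i, ContDiffOn ℝ (⊤ : ℕ∞) (a k i) (Θ ×ˢ Ξ))
    {θ : Fin n → ℝ} (hθ : θ ∈ Θ) (y : Fin dbar → ℝ)
    (hy : ∀ ξ ∈ Ξ, ∀ (j : Fin m) (i : Fin n), dbar ≤ (i : ℕ) →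
      ∑ k, xiDerivs [j] (fun q => a k i q) (θ, ξ) * y k = 0)
    {ξ ξ' : Fin m → ℝ} (hξ : ξ ∈ Ξ) (hξ' : ξ' ∈ Ξ) :
    graphMap dbar a (θ, ξ) y = graphMap dbar a (θ, ξ') y := by
  funext i
  by_cases h : (i : ℕ) < dbar
  · rw [graphMap_apply_lt _ _ _ _ h, graphMap_apply_lt _ _ _ _ h]
  rw [graphMap_apply_ge _ _ _ _ h, graphMap_apply_ge _ _ _ _ h]
  have hd : ∀ η ∈ Ξ, HasFDerivAt (fun η => ∑ k, a k i (θ, η) * y k)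
      (∑ k, y k • (fderiv ℝ (a k i) (θ, η)).comp
        (ContinuousLinearMap.inr ℝ (Fin n → ℝ) (Fin m → ℝ))) η := by
    intro η hη
    refine HasFDerivAt.fun_sum fun k _ => ?_
    have hda : DifferentiableAt ℝ (a k i) (θ, η) :=
      ((ha k i).differentiableOn (by simp)).differentiableAt
        ((hΘo.prod hΞo).mem_nhds ⟨hθ, hη⟩)
    exact (hda.hasFDerivAt.comp η (hasFDerivAt_prodMk_right θ η)).mul_const (y k)
  refine hΞo.is_const_of_fderiv_eq_zero hΞc.isPreconnected
    (fun η hη => (hd η hη).differentiableAt.differentiableWithinAt) (fun η hη => ?_) hξ hξ'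
  rw [(hd η hη).fderiv]
  -- a linear map on `ℝᵐ` is determined by its values on the standard basis
  refine ContinuousLinearMap.coe_injective (LinearMap.pi_ext' fun j => LinearMap.ext_ring ?_)
  have := hy η hη j i (not_lt.mp h)
  simpa [xiDerivs, mul_comm] using this

/-! ### The common kernel of the generators of `P̂` -/

/-- `rank M` independent rows of `M` already cut out `ker M`. -/
lemma ker_rows_eq {dbar r rk : ℕ} (M : Matrix (Fin r) (Fin dbar) ℝ)
    (N : Matrix (Fin rk) (Fin dbar) ℝ) (hM : M.rank = rk) (hrow : ∀ i, ∃ i', N i = M i')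
    (hN : LinearIndependent ℝ N) :
    LinearMap.ker N.mulVecLin = LinearMap.ker M.mulVecLin := by
  symm
  apply Submodule.eq_of_le_of_finrank_eq
  · intro x hx
    rw [LinearMap.mem_ker, Matrix.mulVecLin_apply] at hx ⊢
    funext i
    obtain ⟨i', hi'⟩ := hrow i
    have := congrFun hx i'
    simpa [Matrix.mulVec, hi'] using this
  · have h1 := M.mulVecLin.finrank_range_add_finrank_ker
    have h2 := N.mulVecLin.finrank_range_add_finrank_ker
    have h3 : N.rank = rk := by simpa using LinearIndependent.rank_matrix (M := N) hN
    rw [Matrix.rank] at hM h3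
    omega

/-- The generators of `P̂(p)`. -/
noncomputable def phatGen {n m : ℕ} (dbar rk : ℕ) (a : Fin dbar → Fin n → Pt n m → ℝ)
    (Mhat : Fin rk → Pt n m → Fin dbar → ℝ) (p : Pt n m) :
    Fin rk ⊕ {s : Fin n // dbar ≤ (s : ℕ)} → Module.Dual ℝ (Pt n m) :=
  Sum.elim
    (fun i : Fin rk =>
      covec (fun iθ => if h : (iθ : ℕ) < dbar then -(Mhat i p ⟨(iθ : ℕ), h⟩) else 0)
        (0 : Fin m → ℝ))
    (fun s : {s : Fin n // dbar ≤ (s : ℕ)} =>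
      omS dbar (fun k i q => -(a k i q)) s.1 p)

/-- Rewrites a sum over `i < n` with no contribution from `i ≥ d̄` as a sum over `k < d̄`. -/
lemma sum_dite_lt {n dbar : ℕ} (hdn : dbar ≤ n) (f : Fin dbar → ℝ) (w : Fin n → ℝ) :
    ∑ i : Fin n, (if h : (i : ℕ) < dbar then f ⟨i, h⟩ else 0) * w i
      = ∑ k : Fin dbar, f k * w (Fin.castLE hdn k) := by
  symm
  refine Finset.sum_of_injOn (Fin.castLE hdn) (Fin.castLE_injective hdn).injOn (by simp) ?_ ?_
  · intro i _ hi
    have : ¬ (i : ℕ) < dbar := fun h => hi ⟨⟨i, h⟩, by simp, rfl⟩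
    simp [this]
  · intro k _
    simp

lemma phatGen_inl {n m dbar rk : ℕ} (hdn : dbar ≤ n) (a : Fin dbar → Fin n → Pt n m → ℝ)
    (Mhat : Fin rk → Pt n m → Fin dbar → ℝ) (p x : Pt n m) (i : Fin rk) :
    phatGen dbar rk a Mhat p (Sum.inl i) x
      = -∑ k, Mhat i p k * x.1 (Fin.castLE hdn k) := by
  simp only [phatGen, Sum.elim_inl, covec_apply]
  rw [sum_dite_lt hdn (fun k => -(Mhat i p k))]
  simp

lemma phatGen_inr {n m dbar rk : ℕ} (hdn : dbar ≤ n) (a : Fin dbar → Fin n → Pt n m → ℝ)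
    (Mhat : Fin rk → Pt n m → Fin dbar → ℝ) (p x : Pt n m) (s : {s : Fin n // dbar ≤ (s : ℕ)}) :
    phatGen dbar rk a Mhat p (Sum.inr s) x
      = x.1 s - ∑ k, a k s p * x.1 (Fin.castLE hdn k) := by
  simp only [phatGen, Sum.elim_inr, omS, covec_apply]
  have hs : ¬ ((s : Fin n) : ℕ) < dbar := not_lt.mpr s.2
  have : ∀ i : Fin n, (if h : (i : ℕ) < dbar then -(a ⟨i, h⟩ s p)
        else if i = (s : Fin n) then (1 : ℝ) else 0) * x.1 i
      = (if h : (i : ℕ) < dbar then (fun k => -(a k s p)) ⟨i, h⟩ else 0) * x.1 i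
        + (if i = (s : Fin n) then x.1 i else 0) := by
    intro i
    by_cases h : (i : ℕ) < dbar
    · have : i ≠ s := fun e => hs (e ▸ h)
      simp [h, this]
    · simp [h]
  simp only [this, Finset.sum_add_distrib]
  rw [sum_dite_lt hdn (fun k => -(a k s p))]
  simp
  ring

/-- The common kernel of the generators of `P̂(p)` is `G_p (ker M̂) × ℝᵐ`. -/
lemma iInf_ker_gen {n m dbar rk : ℕ} (hdn : dbar ≤ n) (a : Fin dbar → Fin n → Pt n m → ℝ)
    (Mhat : Fin rk → Pt n m → Fin dbar → ℝ) (p x : Pt n m) :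
    (∀ g, phatGen dbar rk a Mhat p g x = 0) ↔
      x.1 ∈ Submodule.map (graphMap dbar a p)
        (LinearMap.ker (Matrix.of fun i k => Mhat i p k).mulVecLin) := by
  constructor
  · intro h
    refine ⟨fun k => x.1 (Fin.castLE hdn k), ?_, ?_⟩
    · refine LinearMap.mem_ker.mpr (funext fun i => ?_)
      have := h (Sum.inl i)
      rw [phatGen_inl hdn, neg_eq_zero] at this
      simpa [Matrix.mulVec, dotProduct] using this
    · funext i
      by_cases hi : (i : ℕ) < dbar
      · rw [graphMap_apply_lt _ _ _ _ hi]; rfl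
      · rw [graphMap_apply_ge _ _ _ _ hi]
        have := h (Sum.inr ⟨i, not_lt.mp hi⟩)
        rw [phatGen_inr hdn] at this
        exact (sub_eq_zero.mp this).symm
  · rintro ⟨y, hy, hyx⟩ g
    have hk : ∀ k, x.1 (Fin.castLE hdn k) = y k := fun k => by
      rw [← hyx, graphMap_apply_lt _ _ _ _ (by simp)]; rfl
    rcases g with i | s
    · rw [phatGen_inl hdn]
      have := congrFun (LinearMap.mem_ker.mp hy) i
      simpa [hk, Matrix.mulVec, dotProduct] using this
    · rw [phatGen_inr hdn, ← hyx, graphMap_apply_ge _ _ _ _ (not_lt.mpr s.2), hyx]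
      simp [hk]

lemma mem_PhatSpan_iff {n m dbar rk : ℕ} (hdn : dbar ≤ n) (a : Fin dbar → Fin n → Pt n m → ℝ)
    (Mhat : Fin rk → Pt n m → Fin dbar → ℝ) (p : Pt n m) (φ : Module.Dual ℝ (Pt n m)) :
    φ ∈ PhatSpan dbar rk a Mhat p ↔
      (∀ u : Fin m → ℝ, φ ((0 : Fin n → ℝ), u) = 0) ∧
      ∀ w ∈ Submodule.map (graphMap dbar a p)
        (LinearMap.ker (Matrix.of fun i k => Mhat i p k).mulVecLin),
        φ (w, (0 : Fin m → ℝ)) = 0 := by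
  have hspan : PhatSpan dbar rk a Mhat p
      = Submodule.span ℝ (Set.range (phatGen dbar rk a Mhat p)) := rfl
  rw [hspan]
  constructor
  · intro hφ
    have key : ∀ x : Pt n m, (∀ g, phatGen dbar rk a Mhat p g x = 0) → φ x = 0 := by
      intro x hx
      have hle : Submodule.span ℝ (Set.range (phatGen dbar rk a Mhat p))
          ≤ LinearMap.ker (Module.Dual.eval ℝ (Pt n m) x) := by
        rw [Submodule.span_le]
        rintro _ ⟨g, rfl⟩
        exact hx g
      exact hle hφ
    exact ⟨fun u => key _ ((iInf_ker_gen hdn a Mhat p _).mpr (Submodule.zero_mem _)),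
      fun w hw => key _ ((iInf_ker_gen hdn a Mhat p _).mpr hw)⟩
  · rintro ⟨h0, h1⟩
    refine mem_span_of_iInf_ker_le_ker fun x hx => ?_
    have hx' : ∀ g, phatGen dbar rk a Mhat p g x = 0 := by simpa using hx
    have hsplit : x = (x.1, 0) + (0, x.2) := by simp
    rw [LinearMap.mem_ker, hsplit, map_add, h0, h1 _ ((iInf_ker_gen hdn a Mhat p x).mp hx'),
      add_zero]

/-! ### Duality between `P̂` and `Δ` -/

/-- The covectors `(γ, 0)` with `γ` annihilating `Δ` are the pullbacks of the annihilator of `Δ`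
under the projection to the `θ`-component. -/
lemma PhatSpan_eq_map {n m : ℕ} (P : Submodule ℝ (Module.Dual ℝ (Pt n m)))
    (Δ : Submodule ℝ (Fin n → ℝ))
    (h : ∀ φ, φ ∈ P ↔ (∀ u : Fin m → ℝ, φ ((0 : Fin n → ℝ), u) = 0) ∧
      ∀ w ∈ Δ, φ (w, (0 : Fin m → ℝ)) = 0) :
    P = Submodule.map (LinearMap.fst ℝ (Fin n → ℝ) (Fin m → ℝ)).dualMap Δ.dualAnnihilator := by
  ext φ
  rw [h]
  constructor
  · rintro ⟨h0, h1⟩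
    refine ⟨φ.comp (LinearMap.inl ℝ _ _), ?_, ?_⟩
    · exact (Submodule.mem_dualAnnihilator _).mpr h1
    · refine LinearMap.ext fun x => ?_
      have hsplit : x = (x.1, 0) + (0, x.2) := by simp
      conv_rhs => rw [hsplit, map_add, h0, add_zero]
      rfl
  · rintro ⟨γ, hγ, rfl⟩
    exact ⟨fun u => map_zero γ, fun w hw => (Submodule.mem_dualAnnihilator γ).mp hγ w hw⟩

/-- the subspace `Δ(θ)` of θ-components of vectors of `D̄(θ,ξ)` is
independent of ξ and has constant dimension `q = d̄ − rank M`; moreover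
`P̂(θ,ξ) = {(γ,0) : γ annihilates Δ(θ)}`, so `dim Δ + dim P̂ = n`. -/
theorem stmt8 (n m dbar d : ℕ) (hn : 1 ≤ n) (hm : 1 ≤ m)
    (hdd : dbar ≤ d) (hdn : dbar ≤ n) (hdm : d - dbar ≤ m)
    (Θ : Set (Fin n → ℝ)) (Ξ : Set (Fin m → ℝ))
    (hΘo : IsOpen Θ) (hΘc : IsConnected Θ) (hΞo : IsOpen Ξ) (hΞc : IsConnected Ξ)
    (a : Fin dbar → Fin n → Pt n m → ℝ)
    (b : Fin dbar → Fin m → Pt n m → ℝ)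
    (bl : Fin (d - dbar) → Fin m → Pt n m → ℝ)
    (ha : ∀ k i, ContDiffOn ℝ (⊤ : ℕ∞) (a k i) (Θ ×ˢ Ξ))
    (hb : ∀ k j, ContDiffOn ℝ (⊤ : ℕ∞) (b k j) (Θ ×ˢ Ξ))
    (hbl : ∀ l j, ContDiffOn ℝ (⊤ : ℕ∞) (bl l j) (Θ ×ˢ Ξ))
    -- the matrix M and its constant rank rk
    (r rk : ℕ) (Mrow : Fin r → Pt n m → Fin dbar → ℝ)
    (hMrows : ∀ i : Fin r, ∃ (js : List (Fin m)) (ib : Fin n), js ≠ [] ∧ dbar ≤ (ib : ℕ) ∧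
      ∀ p k, Mrow i p k = xiDerivs js (fun q => a k ib q) p)
    (hMrank : ∀ p ∈ Θ ×ˢ Ξ, (Matrix.of fun i k => Mrow i p k).rank = rk)
    (hMspan : ∀ (js : List (Fin m)), js ≠ [] → ∀ ib : Fin n, dbar ≤ (ib : ℕ) →
      ∀ p ∈ Θ ×ˢ Ξ, (fun k => xiDerivs js (fun q => a k ib q) p) ∈
        Submodule.span ℝ (Set.range fun i => Mrow i p))
    -- the smooth pointwise basis c₁(θ),…,c_q(θ) of ker M
    (c : Fin (dbar - rk) → (Fin n → ℝ) → Fin dbar → ℝ)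
    (hcsmooth : ∀ r' k, ContDiffOn ℝ (⊤ : ℕ∞) (fun θ => c r' θ k) Θ)
    (hcindep : ∀ p ∈ Θ ×ˢ Ξ, LinearIndependent ℝ fun r' => c r' p.1)
    (hcspan : ∀ p ∈ Θ ×ˢ Ξ, Submodule.span ℝ (Set.range fun r' => c r' p.1)
      = LinearMap.ker (Matrix.of fun i k => Mrow i p k).mulVecLin)
    -- M̂ : a maximal set of rows of M that are linearly independent at every point
    (Mhat : Fin rk → Pt n m → Fin dbar → ℝ)
    (hMhatRows : ∀ i : Fin rk, ∃ i' : Fin r, ∀ p, Mhat i p = Mrow i' p)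
    (hMhatLI : ∀ p ∈ Θ ×ˢ Ξ, LinearIndependent ℝ fun i : Fin rk => Mhat i p) :
    -- Δ(θ) is independent of ξ
    (∀ θ ∈ Θ, ∀ ξ ∈ Ξ, ∀ ξ' ∈ Ξ,
      Submodule.map (LinearMap.fst ℝ (Fin n → ℝ) (Fin m → ℝ))
          (DbarSpan dbar d rk a b bl c (θ, ξ))
        = Submodule.map (LinearMap.fst ℝ (Fin n → ℝ) (Fin m → ℝ))
            (DbarSpan dbar d rk a b bl c (θ, ξ'))) ∧
    -- Δ has constant dimension q = d̄ − rank M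
    (∀ p ∈ Θ ×ˢ Ξ,
      Module.finrank ℝ (Submodule.map (LinearMap.fst ℝ (Fin n → ℝ) (Fin m → ℝ))
        (DbarSpan dbar d rk a b bl c p)) = dbar - rk) ∧
    -- P̂(θ,ξ) = {(γ,0) : γ annihilates Δ(θ)}
    (∀ p ∈ Θ ×ˢ Ξ, ∀ φ : Module.Dual ℝ (Pt n m),
      φ ∈ PhatSpan dbar rk a Mhat p ↔
        ((∀ u : Fin m → ℝ, φ ((0 : Fin n → ℝ), u) = 0) ∧
          ∀ w ∈ Submodule.map (LinearMap.fst ℝ (Fin n → ℝ) (Fin m → ℝ))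
            (DbarSpan dbar d rk a b bl c p), φ (w, (0 : Fin m → ℝ)) = 0)) ∧
    -- dim Δ + dim P̂ = n
    (∀ p ∈ Θ ×ˢ Ξ,
      Module.finrank ℝ (Submodule.map (LinearMap.fst ℝ (Fin n → ℝ) (Fin m → ℝ))
          (DbarSpan dbar d rk a b bl c p))
        + Module.finrank ℝ (PhatSpan dbar rk a Mhat p) = n) := by
  have hΔ := map_fst_DbarSpan d rk a b bl c
  have hdim : ∀ p ∈ Θ ×ˢ Ξ,
      Module.finrank ℝ (Submodule.map (LinearMap.fst ℝ (Fin n → ℝ) (Fin m → ℝ))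
        (DbarSpan dbar d rk a b bl c p)) = dbar - rk := by
    intro p hp
    rw [hΔ, ← (Submodule.equivMapOfInjective _ (graphMap_injective hdn a p) _).finrank_eq,
      finrank_span_eq_card (hcindep p hp), Fintype.card_fin]
  have hP : ∀ p ∈ Θ ×ˢ Ξ, ∀ φ : Module.Dual ℝ (Pt n m),
      φ ∈ PhatSpan dbar rk a Mhat p ↔
        ((∀ u : Fin m → ℝ, φ ((0 : Fin n → ℝ), u) = 0) ∧
          ∀ w ∈ Submodule.map (LinearMap.fst ℝ (Fin n → ℝ) (Fin m → ℝ))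
            (DbarSpan dbar d rk a b bl c p), φ (w, (0 : Fin m → ℝ)) = 0) := by
    intro p hp φ
    have hker := ker_rows_eq (Matrix.of fun i k => Mrow i p k) (Matrix.of fun i k => Mhat i p k)
      (hMrank p hp) (fun i => (hMhatRows i).imp fun i' h => h p) (hMhatLI p hp)
    rw [mem_PhatSpan_iff hdn, hΔ, hcspan p hp, hker]
  refine ⟨fun θ hθ ξ hξ ξ' hξ' => ?_, hdim, hP, fun p hp => ?_⟩
  · rw [hΔ, hΔ, Submodule.map_span, Submodule.map_span, ← Set.range_comp, ← Set.range_comp]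
    congr 2
    funext r'
    refine graphMap_eq_of_fiber hΘo hΞo hΞc a ha hθ (c r' θ) (fun η hη j i hi => ?_) hξ hξ'
    have hc : c r' θ ∈ LinearMap.ker (Matrix.of fun i k => Mrow i (θ, η) k).mulVecLin := by
      rw [← hcspan (θ, η) ⟨hθ, hη⟩]
      exact Submodule.subset_span ⟨r', rfl⟩
    -- pairing with `c_r(θ)` kills the rows of `M`, hence their span
    have hle : Submodule.span ℝ (Set.range fun i => Mrow i (θ, η))
        ≤ LinearMap.ker (dotProductBilin ℝ ℝ |>.flip (c r' θ)) := by
      rw [Submodule.span_le]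
      rintro _ ⟨i, rfl⟩
      exact congrFun (LinearMap.mem_ker.mp hc) i
    exact hle (hMspan [j] (by simp) i hi (θ, η) ⟨hθ, hη⟩)
  · have hinj : Function.Injective (LinearMap.fst ℝ (Fin n → ℝ) (Fin m → ℝ)).dualMap :=
      LinearMap.dualMap_injective_of_surjective LinearMap.fst_surjective
    rw [PhatSpan_eq_map _ _ (hP p hp), ← (Submodule.equivMapOfInjective _ hinj _).finrank_eq,
      Subspace.finrank_add_finrank_dualAnnihilator_eq, Module.finrank_fin_fun]
end
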